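/- arXiv:2401.09586 — 2 statements merged into one kernel-verified Lean document; each statement's English description precedes it below -/
import Mathlib

section
/- Let d ≥ 2 and K > 0. Then there exists a constant C > 0, depending only on d and K, such that for every A ∈ ℝ^{d×d} with ‖A‖ ≤ K, every ε ∈ (0, 1], and every F ∈ ℝ^{d×d}, it holds dist(F, SO(d)) ≤ C · dist(exp(εA) F, SO(d)) + C ε, where ‖·‖ is the Frobenius norm. -/
open Matrix

attribute [local instance] Matrix.frobeniusNormedAddCommGroup Matrix.frobeniusNormedSpace

/-- `SO(d)`: real `d×d` matrices `Q` with `QᵀQ = I` and `det Q = 1`. -/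
def SOd (d : ℕ) : Set (Matrix (Fin d) (Fin d) ℝ) :=
  {Q | Qᵀ * Q = 1 ∧ Q.det = 1}

section aux

attribute [local instance] Matrix.frobeniusNormedRing Matrix.frobeniusNormedAlgebra

lemma norm_SOd {d : ℕ} {Q : Matrix (Fin d) (Fin d) ℝ} (hQ : Q ∈ SOd d) : ‖Q‖ ≤ d := by
  have h1 : ∀ i j, ‖Q i j‖ ≤ 1 := fun i j =>
    entry_norm_bound_of_unitary (U := Q)
      ((Matrix.mem_unitaryGroup_iff').2 (by simpa [star_eq_conjTranspose] using hQ.1)) i j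
  rw [Matrix.frobenius_norm_def, ← Real.sqrt_eq_rpow]
  apply Real.sqrt_le_iff.2
  refine ⟨by positivity, ?_⟩
  calc ∑ i, ∑ j, ‖Q i j‖ ^ (2:ℝ) ≤ ∑ i : Fin d, ∑ j : Fin d, (1:ℝ) := by
        refine Finset.sum_le_sum fun i _ => Finset.sum_le_sum fun j _ => ?_
        exact Real.rpow_le_one (norm_nonneg _) (h1 i j) (by norm_num)
    _ = (d:ℝ)^2 := by simp [sq]

lemma exp_bounds (d : ℕ) (K : ℝ) : ∃ M : ℝ, 0 < M ∧
    ∀ X : Matrix (Fin d) (Fin d) ℝ, ‖X‖ ≤ K →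
      ‖NormedSpace.exp X‖ ≤ M ∧ ‖NormedSpace.exp X - 1‖ ≤ M * ‖X‖ := by
  obtain ⟨M, hM⟩ := (isCompact_closedBall (0 : Matrix (Fin d) (Fin d) ℝ) K).exists_bound_of_continuousOn
    (f := NormedSpace.exp) (NormedSpace.exp_continuous).continuousOn
  have hM' : ∀ X : Matrix (Fin d) (Fin d) ℝ, ‖X‖ ≤ K → ‖NormedSpace.exp X‖ ≤ |M| + 1 := by
    intro X hX
    have := hM X (by simpa using hX)
    have := le_abs_self M
    linarith
  refine ⟨|M| + 1, by positivity, fun X hX => ⟨hM' X hX, ?_⟩⟩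
  have key := norm_image_sub_le_of_norm_deriv_le_segment_01'
    (f := fun t : ℝ => NormedSpace.exp (t • X)) (f' := fun t : ℝ => NormedSpace.exp (t • X) * X)
    (C := (|M| + 1) * ‖X‖)
    (fun t _ => (hasDerivAt_exp_smul_const (𝕂 := ℝ) X t).hasDerivWithinAt)
    (fun t ht => by
      refine (norm_mul_le _ _).trans ?_
      gcongr
      apply hM'
      rw [norm_smul, Real.norm_eq_abs, abs_of_nonneg ht.1]
      nlinarith [norm_nonneg X, ht.1, ht.2])
  simpa using key

theorem stmt12_aux (d : ℕ) (hd : 2 ≤ d) (K : ℝ) (hK : 0 < K) :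
    ∃ C : ℝ, 0 < C ∧ ∀ A : Matrix (Fin d) (Fin d) ℝ, ‖A‖ ≤ K →
      ∀ ε : ℝ, 0 < ε → ε ≤ 1 → ∀ F : Matrix (Fin d) (Fin d) ℝ,
        Metric.infDist F (SOd d) ≤
          C * Metric.infDist (NormedSpace.exp (ε • A) * F) (SOd d) + C * ε := by
  obtain ⟨M, hM0, hM⟩ := exp_bounds d K
  refine ⟨M + M * K * d, by positivity, fun A hA ε hε hε1 F => ?_⟩
  have hne : (SOd d).Nonempty := ⟨1, by simp [SOd]⟩
  have hX : ‖-(ε • A)‖ ≤ ε * K := by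
    rw [norm_neg, norm_smul, Real.norm_eq_abs, abs_of_pos hε]
    gcongr
  obtain ⟨h1, h2⟩ := hM (-(ε • A)) (hX.trans (by nlinarith))
  have hinv : NormedSpace.exp (-(ε • A)) * NormedSpace.exp (ε • A) = 1 := by
    rw [← Matrix.exp_add_of_commute _ _ ((Commute.refl (ε • A)).neg_left)]
    simp
  set G := NormedSpace.exp (ε • A)
  set H := NormedSpace.exp (-(ε • A))
  have main : ∀ Q ∈ SOd d, Metric.infDist F (SOd d) ≤ M * dist (G * F) Q + M * K * d * ε := by
    intro Q hQ
    refine (Metric.infDist_le_dist_of_mem hQ).trans ?_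
    have e : F - Q = H * (G * F - Q) + (H - 1) * Q := by
      rw [mul_sub, ← mul_assoc, hinv, sub_mul]; simp
    rw [dist_eq_norm, dist_eq_norm, e]
    have hQn := norm_SOd hQ
    calc ‖H * (G * F - Q) + (H - 1) * Q‖ ≤ ‖H‖ * ‖G * F - Q‖ + ‖H - 1‖ * ‖Q‖ :=
          (norm_add_le _ _).trans (add_le_add (norm_mul_le _ _) (norm_mul_le _ _))
      _ ≤ M * ‖G * F - Q‖ + (M * (ε * K)) * d := by
          gcongr
          exact h2.trans (by gcongr)
      _ = _ := by ring
  have hI : (Metric.infDist F (SOd d) - M * K * d * ε) / M ≤ Metric.infDist (G * F) (SOd d) := by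
    refine (Metric.le_infDist hne).2 fun {Q} hQ => ?_
    rw [div_le_iff₀ hM0]
    have := main Q hQ
    linarith
  rw [div_le_iff₀ hM0] at hI
  have h0 : 0 ≤ Metric.infDist (G * F) (SOd d) := Metric.infDist_nonneg
  have h3 : 0 ≤ M * K * d * Metric.infDist (G * F) (SOd d) := by positivity
  have h4 : 0 ≤ M * ε := by positivity
  linarith

end aux

/-- Let `d ≥ 2` and `K > 0`. Then there is `C > 0`, depending only on `d` and `K`, such that for
every `A` with `‖A‖ ≤ K`, every `ε ∈ (0, 1]`, and every `F`, it holds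
`dist(F, SO(d)) ≤ C · dist(exp(εA) F, SO(d)) + C ε` (Frobenius norm and distance). -/
theorem stmt12 (d : ℕ) (hd : 2 ≤ d) (K : ℝ) (hK : 0 < K) :
    ∃ C : ℝ, 0 < C ∧ ∀ A : Matrix (Fin d) (Fin d) ℝ, ‖A‖ ≤ K →
      ∀ ε : ℝ, 0 < ε → ε ≤ 1 → ∀ F : Matrix (Fin d) (Fin d) ℝ,
        Metric.infDist F (SOd d) ≤
          C * Metric.infDist (NormedSpace.exp (ε • A) * F) (SOd d) + C * ε := by
  exact stmt12_aux d hd K hK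
end

section
/- Let d ≥ 2 and p ≥ 2, and let Ω ⊂ ℝ^d be a bounded measurable set with finite Lebesgue measure. Let Φ : ℝ^{d×d} → [0, ∞) be twice continuously differentiable on a neighborhood of SO(d), frame-indifferent (Φ(QF) = Φ(F) for all Q ∈ SO(d), F ∈ ℝ^{d×d}), with Φ(R) = 0 for all R ∈ SO(d) and Φ(F) ≥ g_p(dist(F, SO(d))) for all F ∈ ℝ^{d×d}. Let ε_j → 0⁺, let (F_j) ⊂ L²(Ω; ℝ^{d×d}) converge weakly in L² to F (i.e. ∫_Ω F_j : G dx → ∫_Ω F : G dx for every G ∈ L²(Ω; ℝ^{d×d})), and let (G_j) ⊂ L^∞(Ω; ℝ^{d×d}) with sup_j ‖G_j‖_{L^∞} < ∞ converge strongly in L²(Ω; ℝ^{d×d}) to G. Then liminf_{j→∞} ε_j^{−2} ∫_Ω Φ(exp(ε_j G_j(x)) (I + ε_j F_j(x))) dx ≥ (1/2) ∫_Ω D²Φ(I)[F(x) + G(x), F(x) + G(x)] dx. -/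
open Matrix MeasureTheory Filter Topology

attribute [local instance] Matrix.frobeniusNormedAddCommGroup Matrix.frobeniusNormedSpace

/-- For `p > 1`, `g_p(t) = t^2/2` if `0 ≤ t ≤ 1` and `g_p(t) = t^p/p + 1/2 - 1/p` if `t > 1`. -/
noncomputable def gp (p t : ℝ) : ℝ := if t ≤ 1 then t ^ 2 / 2 else t ^ p / p + 1 / 2 - 1 / p


section general
variable {E : Type*} [NormedAddCommGroup E] [NormedSpace ℝ E]

theorem taylor2 (f : E → ℝ) (x : E) (hf : ContDiffAt ℝ 2 f x) (h0 : ∀ y, 0 ≤ f y)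
    (hx : f x = 0) (δ : ℝ) (hδ : 0 < δ) :
    ∃ r > 0, ∀ h : E, ‖h‖ ≤ r →
      |f (x + h) - (1/2) * fderiv ℝ (fderiv ℝ f) x h h| ≤ δ * ‖h‖ ^ 2 := by
  set B := fderiv ℝ (fderiv ℝ f) x with hB
  have hsymm : ∀ v w, B v w = B w v := by
    have := hf.isSymmSndFDerivAt (by simp)
    intro v w; exact this v w
  have hd : HasFDerivAt (fderiv ℝ f) B x :=
    ((hf.fderiv_right (m := 1) (by norm_num)).differentiableAt (by norm_num)).hasFDerivAt
  have hx0 : fderiv ℝ f x = 0 := by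
    apply IsLocalMin.fderiv_eq_zero
    exact Filter.Eventually.of_forall (fun y => by rw [hx]; exact h0 y)
  have hev : ∀ᶠ y in 𝓝 x, DifferentiableAt ℝ f y := by
    filter_upwards [hf.eventually (by simp)] with y hy
    exact hy.differentiableAt (by norm_num)
  have hlo := (hasFDerivAt_iff_isLittleO.1 hd).def hδ
  obtain ⟨r, hr, hball⟩ := Metric.eventually_nhds_iff.1 (hev.and hlo)
  refine ⟨r/2, by positivity, fun h hh => ?_⟩
  have key := (convex_closedBall x ‖h‖).norm_image_sub_le_of_norm_hasFDerivWithin_le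
    (𝕜 := ℝ)
    (f := fun y => f y - (1/2) * B (y - x) (y - x))
    (f' := fun y => fderiv ℝ f y - B (y - x)) (C := δ * ‖h‖) (x := x) (y := x + h)
    (fun y hy => ?_) (fun y hy => ?_) (by simp) (by simp)
  · simpa [hx, pow_two, mul_assoc] using key
  · have hy' : dist y x < r := lt_of_le_of_lt (Metric.mem_closedBall.1 hy) (by linarith)
    have h1 := (hball hy').1.hasFDerivAt
    have hid : HasFDerivAt (fun y : E => y - x) (ContinuousLinearMap.id ℝ E) y :=
      (hasFDerivAt_id y).sub_const x
    have h2 := (B.hasFDerivAt.comp y hid).clm_apply hid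
    have h3 := h1.sub (h2.const_mul (1/2))
    refine (HasFDerivAt.congr_fderiv h3 ?_).hasFDerivWithinAt
    ext v
    simp
    rw [hsymm v y, hsymm v x]
    ring
  · have hy1 := Metric.mem_closedBall.1 hy
    have hy' : dist y x < r := lt_of_le_of_lt hy1 (by linarith)
    have h1 := (hball hy').2
    rw [hx0, sub_zero] at h1
    refine h1.trans ?_
    rw [dist_eq_norm] at hy1
    gcongr

theorem psd_of_min (f : E → ℝ) (x : E) (hf : ContDiffAt ℝ 2 f x) (h0 : ∀ y, 0 ≤ f y)
    (hx : f x = 0) (h : E) : 0 ≤ fderiv ℝ (fderiv ℝ f) x h h := by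
  refine le_of_forall_pos_le_add fun η hη => ?_
  obtain ⟨r, hr, H⟩ := taylor2 f x hf h0 hx (η / (2 * (‖h‖ ^ 2 + 1))) (by positivity)
  set t := r / (‖h‖ + 1) with ht
  have htp : 0 < t := by positivity
  have h1 := H (t • h) (by
    rw [norm_smul, Real.norm_of_nonneg htp.le, ht, div_mul_eq_mul_div, div_le_iff₀ (by positivity)]
    nlinarith [norm_nonneg h])
  have h2 := (abs_le.1 h1).1
  have h3 := (abs_le.1 h1).2
  have h4 := h0 (x + t • h)
  simp only [map_smul, _root_.smul_apply, smul_eq_mul, norm_smul,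
    Real.norm_of_nonneg htp.le] at h2 h3
  set b := fderiv ℝ (fderiv ℝ f) x h h
  have h5 : η / (2 * (‖h‖ ^ 2 + 1)) * (t * ‖h‖) ^ 2 ≤ η / 2 * t ^ 2 := by
    have : η / (2 * (‖h‖ ^ 2 + 1)) * ‖h‖ ^ 2 ≤ η / 2 := by
      rw [div_mul_eq_mul_div, div_le_iff₀ (by positivity)]
      nlinarith
    calc _ = (η / (2 * (‖h‖ ^ 2 + 1)) * ‖h‖ ^ 2) * t ^ 2 := by ring
      _ ≤ _ := by gcongr
  have h6 : 0 ≤ t ^ 2 * (b + η) := by nlinarith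
  have := nonneg_of_mul_nonneg_right h6 (by positivity)
  linarith
end general

section banach
variable {E : Type*} [NormedRing E] [NormedAlgebra ℝ E] [CompleteSpace E]

theorem exp_small (δ : ℝ) (hδ : 0 < δ) : ∃ r > 0, ∀ X : E,
    ‖X‖ ≤ r → ‖NormedSpace.exp X - 1 - X‖ ≤ δ * ‖X‖ := by
  have h := hasFDerivAt_exp_zero (𝕂 := ℝ) (𝔸 := E)
  have hlo := (hasFDerivAt_iff_isLittleO.1 h).def hδ
  obtain ⟨r, hr, hball⟩ := Metric.eventually_nhds_iff.1 hlo
  refine ⟨r/2, by positivity, fun X hX => ?_⟩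
  have h1 := hball (y := X) (by rw [dist_zero_right]; exact lt_of_le_of_lt hX (by linarith))
  simpa using h1

set_option maxHeartbeats 1000000 in
theorem pointwise_bound (Φ : E → ℝ) (h0 : ∀ F, 0 ≤ Φ F)
    (h1 : Φ 1 = 0) (hC : ContDiffAt ℝ 2 Φ 1) (K : ℝ) (hK : 1 ≤ K) (δ : ℝ) (hδ : 0 < δ)
    (hδ1 : δ < 1) :
    ∃ ρ > 0, ∀ ε, 0 < ε → ε < ρ → ∀ F G H : E, ‖G‖ ≤ K →
      ε * ‖F + G‖ ≤ ρ →
      fderiv ℝ (fderiv ℝ Φ) 1 (F + G) H - (1/2) * fderiv ℝ (fderiv ℝ Φ) 1 H H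
        - δ * (‖fderiv ℝ (fderiv ℝ Φ) 1‖ + 2) * (‖F + G‖ ^ 2 + ‖H‖ ^ 2 + 1)
      ≤ ε⁻¹ ^ 2 * Φ (NormedSpace.exp (ε • G) * (1 + ε • F)) := by
  obtain ⟨r, hr, hT⟩ := taylor2 Φ 1 hC h0 h1 δ hδ
  have hpsd := psd_of_min Φ 1 hC h0 h1
  have hsymm : ∀ v w, fderiv ℝ (fderiv ℝ Φ) 1 v w = fderiv ℝ (fderiv ℝ Φ) 1 w v := by
    have := hC.isSymmSndFDerivAt (by simp)
    intro v w; exact this v w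
  set B := fderiv ℝ (fderiv ℝ Φ) 1 with hB
  have hKp : 0 < K := by linarith
  have hδK : 0 < δ / (2 * K) := by positivity
  obtain ⟨r', hr', hE⟩ := exp_small (E := E) (δ / (2 * K)) hδK
  refine ⟨min (δ / (4 * K * (1 + K))) (min (r' / K) (r / 2)), by positivity, ?_⟩
  set ρ := min (δ / (4 * K * (1 + K))) (min (r' / K) (r / 2)) with hρ
  have hρ1 : ρ ≤ δ / (4 * K * (1 + K)) := min_le_left _ _
  have hρ2 : ρ ≤ r' / K := (min_le_right _ _).trans (min_le_left _ _)
  have hρ3 : ρ ≤ r / 2 := (min_le_right _ _).trans (min_le_right _ _)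
  have hρ0 : 0 < ρ := by positivity
  rw [le_div_iff₀ (by positivity)] at hρ1 hρ2
  clear_value ρ
  intro ε hε hερ F G H hG hV
  have nε : ∀ X : E, ‖ε • X‖ = ε * ‖X‖ := fun X => by
    rw [norm_smul, Real.norm_of_nonneg hε.le]
  set R := NormedSpace.exp (ε • G) - 1 - ε • G with hR
  set X := NormedSpace.exp (ε • G) * (1 + ε • F) - 1 with hX
  set A := ε⁻¹ • X with hA
  have hXA : X = ε • A := by rw [hA, smul_smul, mul_inv_cancel₀ hε.ne', one_smul]
  set e := A - (F + G) with he
  have hεG : ‖ε • G‖ ≤ ε * K := by rw [nε]; gcongr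
  have hRn : ‖R‖ ≤ δ / 2 * ε := by
    refine (hE (ε • G) (hεG.trans (by nlinarith))).trans ?_
    calc δ / (2 * K) * ‖ε • G‖ ≤ δ / (2 * K) * (ε * K) := by gcongr
      _ = _ := by field_simp
  have hFn : ‖ε • F‖ ≤ ρ * (1 + K) := by
    have : ε • F = ε • (F + G) - ε • G := by rw [smul_add]; abel
    rw [this]
    refine (norm_sub_le _ _).trans ?_
    rw [nε]
    nlinarith
  have hdec : ε • e = R + (ε • G + R) * (ε • F) := by
    rw [he, smul_sub, ← hXA, hX]
    have : NormedSpace.exp (ε • G) = R + 1 + ε • G := by rw [hR]; abel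
    rw [this, smul_add]
    rw [mul_add, mul_one, add_mul, add_mul, one_mul, add_mul]
    abel
  have hεe : ε * ‖e‖ ≤ ε * δ := by
    rw [← nε, hdec]
    calc ‖R + (ε • G + R) * (ε • F)‖ ≤ ‖R‖ + (‖ε • G‖ + ‖R‖) * ‖ε • F‖ := by
          refine (norm_add_le _ _).trans ?_
          gcongr
          refine (norm_mul_le _ _).trans ?_
          gcongr
          exact norm_add_le _ _
      _ ≤ δ / 2 * ε + (ε * K + ε * K) * (ρ * (1 + K)) := by
          gcongr
          refine hRn.trans ?_
          nlinarith
      _ ≤ ε * δ := by nlinarith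
  have hen : ‖e‖ ≤ δ := le_of_mul_le_mul_left hεe hε
  have hAe : A = F + G + e := by rw [he]; abel
  set V := F + G with hVdef
  have hAn : ‖A‖ ≤ ‖V‖ + δ := by rw [hAe]; exact (norm_add_le _ _).trans (by gcongr)
  have hXn : ‖X‖ ≤ r := by
    rw [hXA, nε]; nlinarith
  have hTay := (abs_le.1 (hT X hXn)).1
  have h1X : 1 + X = NormedSpace.exp (ε • G) * (1 + ε • F) := by rw [hX]; abel
  rw [h1X, hXA, nε] at hTay
  simp only [map_smul, _root_.smul_apply, smul_eq_mul] at hTay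
  have hΦ : (1/2) * B A A - δ * ‖A‖ ^ 2
      ≤ ε⁻¹ ^ 2 * Φ (NormedSpace.exp (ε • G) * (1 + ε • F)) := by
    rw [inv_pow, inv_mul_eq_div, le_div_iff₀ (by positivity)]
    nlinarith
  refine le_trans ?_ hΦ
  have hq := hpsd (A - H)
  simp only [map_sub, _root_.sub_apply, hsymm H A] at hq
  have hBA : B A H = B V H + B e H := by rw [hAe, map_add]; rfl
  have hBe : -(‖B‖ * δ * (‖H‖ ^ 2 + 1)) ≤ B e H := by
    have : |B e H| ≤ ‖B‖ * δ * (‖H‖ ^ 2 + 1) := by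
      refine (B.le_opNorm₂ e H).trans ?_
      gcongr
      have q : ∀ t : ℝ, t ≤ t ^ 2 + 1 := fun t => by nlinarith [sq_nonneg (t - 1), sq_nonneg t]
      exact q _
    exact (abs_le.1 this).1
  have hA2 : ‖A‖ ^ 2 ≤ 2 * (‖V‖ ^ 2 + 1) := by
    have : ‖A‖ ^ 2 ≤ (‖V‖ + δ) ^ 2 := by gcongr
    nlinarith [sq_nonneg (‖V‖ - δ)]
  have hA3 : δ * ‖A‖ ^ 2 ≤ δ * (2 * (‖V‖ ^ 2 + 1)) := by gcongr
  have p1 : 0 ≤ ‖B‖ * δ * ‖V‖ ^ 2 := by positivity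
  have p2 : 0 ≤ δ * ‖H‖ ^ 2 := by positivity
  nlinarith

end banach

section meas
variable {α : Type*} [MeasurableSpace α] (μ : Measure α)

theorem weak_bdd (f : ℕ → α → ℝ) (hf : ∀ j, MemLp (f j) 2 μ)
    (hw : ∀ g, MemLp g 2 μ → ∃ l, Tendsto (fun j => ∫ x, f j x * g x ∂μ) atTop (𝓝 l)) :
    ∃ M, ∀ j, ∫ x, f j x ^ 2 ∂μ ≤ M := by
  have hinner : ∀ j (g : Lp ℝ 2 μ), inner ℝ ((hf j).toLp (f j)) g = ∫ x, f j x * g x ∂μ := by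
    intro j g
    rw [L2.inner_def]
    refine integral_congr_ae ?_
    filter_upwards [(hf j).coeFn_toLp] with x hx
    simp [hx, mul_comm]
  obtain ⟨C, hC⟩ := banach_steinhaus (g := fun j => innerSL ℝ ((hf j).toLp (f j))) (by
    intro g
    obtain ⟨l, hl⟩ := hw g (Lp.memLp g)
    obtain ⟨C, hC⟩ := hl.norm.bddAbove_range
    refine ⟨C, fun j => ?_⟩
    rw [innerSL_apply_apply, hinner]
    exact hC ⟨j, rfl⟩)
  refine ⟨C ^ 2, fun j => ?_⟩
  have h1 := hC j
  rw [innerSL_apply_norm] at h1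
  have h2 : ∫ x, f j x ^ 2 ∂μ = ‖(hf j).toLp (f j)‖ ^ 2 := by
    rw [← real_inner_self_eq_norm_sq, hinner]
    refine integral_congr_ae ?_
    filter_upwards [(hf j).coeFn_toLp] with x hx
    simp [hx, pow_two]
  rw [h2]
  gcongr

variable {E : Type*} [NormedAddCommGroup E] [NormedSpace ℝ E]

theorem bilin_integrable (B : E →L[ℝ] E →L[ℝ] ℝ) (f g : α → E) (hf : MemLp f 2 μ)
    (hg : MemLp g 2 μ) : Integrable (fun x => B (f x) (g x)) μ := by
  have h1 : Integrable (fun x => ‖f x‖ ^ 2) μ := hf.integrable_norm_pow (by norm_num)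
  have h2 : Integrable (fun x => ‖g x‖ ^ 2) μ := hg.integrable_norm_pow (by norm_num)
  refine Integrable.mono' ((h1.add h2).const_mul ‖B‖)
    (B.aestronglyMeasurable_comp₂ hf.1 hg.1) (Eventually.of_forall fun x => ?_)
  refine (B.le_opNorm₂ _ _).trans ?_
  rw [mul_assoc]
  have : ‖f x‖ * ‖g x‖ ≤ ‖f x‖ ^ 2 + ‖g x‖ ^ 2 := by
    nlinarith [sq_nonneg (‖f x‖ - ‖g x‖), sq_nonneg ‖f x‖, sq_nonneg ‖g x‖]
  simp only [Pi.add_apply]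
  gcongr

theorem ofReal_integral_le' (f : α → ℝ) (hf : Integrable f μ) :
    ENNReal.ofReal (∫ x, f x ∂μ) ≤ ∫⁻ x, ENNReal.ofReal (f x) ∂μ := by
  rw [integral_eq_lintegral_pos_part_sub_lintegral_neg_part hf]
  refine (ENNReal.ofReal_le_ofReal (sub_le_self _ ENNReal.toReal_nonneg)).trans ?_
  exact ENNReal.ofReal_toReal_le

theorem liminf_abstract [IsFiniteMeasure μ] (B : E →L[ℝ] E →L[ℝ] ℝ) (hB : ∀ h, 0 ≤ B h h)
    (V : ℕ → α → E) (H : α → E) (hV : ∀ j, MemLp (V j) 2 μ) (hH : MemLp H 2 μ)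
    (M : ℝ) (hM : ∀ j, ∫ x, ‖V j x‖ ^ 2 ∂μ ≤ M)
    (hweak : Tendsto (fun j => ∫ x, B (V j x) (H x) ∂μ) atTop (𝓝 (∫ x, B (H x) (H x) ∂μ)))
    (ε : ℕ → ℝ) (hεpos : ∀ j, 0 < ε j) (hε0 : Tendsto ε atTop (𝓝 0))
    (I : ℕ → α → ℝ) (hI : ∀ j x, 0 ≤ I j x) (C : ℝ) (hC : 0 < C)
    (hP : ∀ δ, 0 < δ → δ < 1 → ∃ ρ > 0, ∀ j, ε j < ρ → ∀ᵐ x ∂μ, ε j * ‖V j x‖ ≤ ρ →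
      B (V j x) (H x) - (1/2) * B (H x) (H x) - δ * C * (‖V j x‖ ^ 2 + ‖H x‖ ^ 2 + 1) ≤ I j x) :
    ENNReal.ofReal ((1/2) * ∫ x, B (H x) (H x) ∂μ) ≤
      liminf (fun j => ∫⁻ x, ENNReal.ofReal (I j x) ∂μ) atTop := by
  set Q := ∫ x, B (H x) (H x) ∂μ with hQ
  set h2 := ∫ x, ‖H x‖ ^ 2 ∂μ with hh2
  have iH2 : Integrable (fun x => ‖H x‖ ^ 2) μ := hH.integrable_norm_pow (by norm_num)
  have iV2 : ∀ j, Integrable (fun x => ‖V j x‖ ^ 2) μ :=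
    fun j => (hV j).integrable_norm_pow (by norm_num)
  have iVH : ∀ j, Integrable (fun x => B (V j x) (H x)) μ :=
    fun j => bilin_integrable μ B _ _ (hV j) hH
  have iHH : Integrable (fun x => B (H x) (H x)) μ := bilin_integrable μ B _ _ hH hH
  have hM0 : 0 ≤ M := (integral_nonneg (fun x => by positivity)).trans (hM 0)
  have hh20 : 0 ≤ h2 := integral_nonneg (fun x => by positivity)
  have main : ∀ η > 0, ENNReal.ofReal ((1/2) * Q - η) ≤
      liminf (fun j => ∫⁻ x, ENNReal.ofReal (I j x) ∂μ) atTop := by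
    intro η hη
    set m := μ.real Set.univ with hm
    have hm0 : 0 ≤ m := measureReal_nonneg
    set W := C * (M + h2 + m) with hW
    have hW0 : 0 ≤ W := by positivity
    set δ := min (1/2) (η / (3 * (W + 1))) with hδ
    have hδ0 : 0 < δ := by positivity
    have hδ1 : δ < 1 := lt_of_le_of_lt (min_le_left _ _) (by norm_num)
    have hδW : δ * W ≤ η / 3 := by
      have : δ ≤ η / (3 * (W + 1)) := min_le_right _ _
      rw [le_div_iff₀ (by positivity)] at this
      nlinarith
    obtain ⟨ρ, hρ, hρP⟩ := hP δ hδ0 hδ1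
    set D := ‖B‖ ^ 2 / (4 * (δ * C)) with hD
    have hD0 : 0 ≤ D := by positivity
    set T : ℕ → Set α := fun j => {x | (ρ / ε j) ^ 2 ≤ ‖V j x‖ ^ 2} with hT
    have hTm : ∀ j, NullMeasurableSet (T j) μ := fun j =>
      nullMeasurableSet_le aemeasurable_const (iV2 j).aemeasurable
    have hTr : ∀ j, μ.real (T j) ≤ M * (ε j / ρ) ^ 2 := by
      intro j
      have h := (mul_meas_ge_le_integral_of_nonneg
        (Eventually.of_forall fun x => by positivity) (iV2 j) ((ρ / ε j) ^ 2)).trans (hM j)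
      have hp : 0 < (ρ / ε j) ^ 2 := by have := hεpos j; positivity
      have e1 : (ε j / ρ) ^ 2 = ((ρ / ε j) ^ 2)⁻¹ := by rw [← inv_pow, inv_div]
      rw [e1, ← div_eq_mul_inv, le_div_iff₀ hp, mul_comm]
      exact h
    have hTt : Tendsto (μ ∘ T) atTop (𝓝 0) := by
      have h1 : Tendsto (fun j => M * (ε j / ρ) ^ 2) atTop (𝓝 0) := by
        have := ((hε0.div_const ρ).pow 2).const_mul M
        simpa using this
      have h2 : Tendsto (fun j => μ.real (T j)) atTop (𝓝 0) :=
        squeeze_zero (fun j => measureReal_nonneg) hTr h1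
      have h3 := ENNReal.tendsto_ofReal h2
      simp only [ENNReal.ofReal_zero] at h3
      refine h3.congr fun j => ?_
      exact ofReal_measureReal
    have hTI := iH2.tendsto_setIntegral_nhds_zero hTt
    have hlim : Tendsto (fun j => ∫ x, B (V j x) (H x) ∂μ - (1/2) * Q
        - D * ∫ x in T j, ‖H x‖ ^ 2 ∂μ) atTop (𝓝 (Q - (1/2) * Q - D * 0)) :=
      (hweak.sub_const _).sub (hTI.const_mul D)
    have hev := hlim.eventually (lt_mem_nhds (show (1/2) * Q - η / 3 < _ by linarith))
    refine le_liminf_of_le (by isBoundedDefault) ?_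
    filter_upwards [hev, hε0.eventually (gt_mem_nhds hρ)] with j hj hjρ
    set L : α → ℝ := fun x => B (V j x) (H x) - (1/2) * B (H x) (H x)
      - δ * C * (‖V j x‖ ^ 2 + ‖H x‖ ^ 2 + 1) - D * (T j).indicator (fun x => ‖H x‖ ^ 2) x with hL
    have iT : Integrable ((T j).indicator (fun x => ‖H x‖ ^ 2)) μ := iH2.indicator₀ (hTm j)
    have i1 : Integrable (fun x => B (V j x) (H x) - (1/2) * B (H x) (H x)) μ :=
      (iVH j).sub (iHH.const_mul _)
    have i2 : Integrable (fun x => ‖V j x‖ ^ 2 + ‖H x‖ ^ 2) μ := (iV2 j).add iH2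
    have i3 : Integrable (fun x => ‖V j x‖ ^ 2 + ‖H x‖ ^ 2 + 1) μ :=
      i2.add (integrable_const 1)
    have i4 := i3.const_mul (δ * C)
    have i5 := iT.const_mul D
    have i6 : Integrable (fun x => B (V j x) (H x) - (1/2) * B (H x) (H x)
      - δ * C * (‖V j x‖ ^ 2 + ‖H x‖ ^ 2 + 1)) μ := i1.sub i4
    have iL : Integrable L μ := i6.sub i5
    have eL : ∫ x, L x ∂μ = ∫ x, B (V j x) (H x) ∂μ - (1/2) * Q
        - δ * C * (∫ x, ‖V j x‖ ^ 2 ∂μ + h2 + m) - D * ∫ x in T j, ‖H x‖ ^ 2 ∂μ := by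
      simp only [hL]
      rw [integral_sub i6 i5, integral_sub i1 i4,
        integral_sub (iVH j) (iHH.const_mul _), integral_const_mul, integral_const_mul,
        integral_const_mul, integral_add i2 (integrable_const 1), integral_add (iV2 j) iH2,
        integral_indicator₀ (hTm j)]
      simp [hm, hQ, hh2]
    have hlow : (1/2) * Q - η ≤ ∫ x, L x ∂μ := by
      rw [eL]
      have : δ * C * (∫ x, ‖V j x‖ ^ 2 ∂μ + h2 + m) ≤ η / 3 := by
        refine le_trans ?_ hδW
        rw [hW, ← mul_assoc]
        gcongr
        exact hM j
      linarith
    refine (ENNReal.ofReal_le_ofReal hlow).trans ((ofReal_integral_le' μ L iL).trans ?_)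
    refine lintegral_mono_ae ?_
    filter_upwards [hρP j hjρ] with x hx
    by_cases hxT : x ∈ T j
    · have : L x ≤ 0 := by
        simp only [hL, Set.indicator_of_mem hxT]
        have b1 : B (V j x) (H x) ≤ ‖B‖ * ‖V j x‖ * ‖H x‖ :=
          (le_abs_self _).trans (B.le_opNorm₂ _ _)
        have b2 := hB (H x)
        have b3 : ‖B‖ * ‖V j x‖ * ‖H x‖ ≤ δ * C * ‖V j x‖ ^ 2 + D * ‖H x‖ ^ 2 := by
          have q : 0 ≤ (2 * (δ * C) * ‖V j x‖ - ‖B‖ * ‖H x‖) ^ 2 / (4 * (δ * C)) := by positivity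
          have e : (2 * (δ * C) * ‖V j x‖ - ‖B‖ * ‖H x‖) ^ 2 / (4 * (δ * C)) =
            δ * C * ‖V j x‖ ^ 2 + D * ‖H x‖ ^ 2 - ‖B‖ * ‖V j x‖ * ‖H x‖ := by
            rw [hD]; field_simp; ring
          linarith
        have b4 : 0 ≤ δ * C * (‖H x‖ ^ 2 + 1) := by positivity
        linarith
      rw [ENNReal.ofReal_of_nonpos this]
      exact zero_le
    · apply ENNReal.ofReal_le_ofReal
      simp only [hL, Set.indicator_of_notMem hxT, mul_zero, sub_zero]
      apply hx
      have h1 : ¬ ((ρ / ε j) ^ 2 ≤ ‖V j x‖ ^ 2) := hxT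
      have h2 : ‖V j x‖ < ρ / ε j := by
        by_contra hcon
        push Not at hcon
        exact h1 (pow_le_pow_left₀ (div_nonneg hρ.le (hεpos j).le) hcon 2)
      rw [lt_div_iff₀ (hεpos j)] at h2
      linarith
  refine le_of_tendsto (x := 𝓝[>] (0:ℝ)) (f := fun η => ENNReal.ofReal ((1/2) * Q - η)) ?_
    (eventually_mem_nhdsWithin.mono fun η hη => main η hη)
  refine ENNReal.tendsto_ofReal ?_
  have : Tendsto (fun η : ℝ => (1/2) * Q - η) (𝓝 0) (𝓝 ((1/2) * Q - 0)) :=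
    tendsto_const_nhds.sub tendsto_id
  rw [sub_zero] at this
  exact this.mono_left nhdsWithin_le_nhds

theorem strong_conv (B : E →L[ℝ] E →L[ℝ] ℝ) (G : ℕ → α → E) (Glim H : α → E)
    (hG : ∀ j, MemLp (G j) 2 μ) (hGlim : MemLp Glim 2 μ) (hH : MemLp H 2 μ)
    (hs : Tendsto (fun j => eLpNorm (fun x => G j x - Glim x) 2 μ) atTop (𝓝 0)) :
    Tendsto (fun j => ∫ x, B (G j x) (H x) ∂μ) atTop (𝓝 (∫ x, B (Glim x) (H x) ∂μ)) := by
  refine tendsto_integral_of_L1' _ (bilin_integrable μ B _ _ hGlim hH).1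
    (Eventually.of_forall fun j => bilin_integrable μ B _ _ (hG j) hH) ?_
  have hb : ∀ j, eLpNorm ((fun x => B (G j x) (H x)) - fun x => B (Glim x) (H x)) 1 μ ≤
      ‖B‖₊ * eLpNorm (fun x => G j x - Glim x) 2 μ * eLpNorm H 2 μ := by
    intro j
    have h := eLpNorm_le_eLpNorm_mul_eLpNorm_of_nnnorm (p := 2) (q := 2) (r := 1)
      (μ := μ) ((hG j).sub hGlim).1 hH.1
      (fun u v => B u v) ‖B‖₊ (Eventually.of_forall fun x => B.le_opNorm₂ _ _)
    refine le_trans (le_of_eq ?_) h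
    congr 1
    ext x
    simp
  have h0 : Tendsto (fun j => ‖B‖₊ * eLpNorm (fun x => G j x - Glim x) 2 μ * eLpNorm H 2 μ)
      atTop (𝓝 (‖B‖₊ * 0 * eLpNorm H 2 μ)) := by
    refine ENNReal.Tendsto.mul_const (ENNReal.Tendsto.const_mul hs (Or.inr (by simp)))
      (Or.inr hH.2.ne)
  rw [mul_zero, zero_mul] at h0
  exact tendsto_of_tendsto_of_tendsto_of_le_of_le tendsto_const_nhds h0 (fun _ => zero_le) hb

theorem memLp_linear {E' : Type*} [NormedAddCommGroup E'] [NormedSpace ℝ E']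
    [FiniteDimensional ℝ E]
    (L : E →ₗ[ℝ] E') (f : α → E) (hf : MemLp f 2 μ) : MemLp (fun x => L (f x)) 2 μ :=
  (LinearMap.toContinuousLinearMap L).comp_memLp' hf

end meas

theorem main_abstract {α E : Type*} [MeasurableSpace α] (μ : Measure α) [IsFiniteMeasure μ]
    [NormedRing E] [NormedAlgebra ℝ E] [CompleteSpace E]
    (Φ : E → ℝ) (h0 : ∀ F, 0 ≤ Φ F) (h1 : Φ 1 = 0) (hC : ContDiffAt ℝ 2 Φ 1)
    (ε : ℕ → ℝ) (hεpos : ∀ j, 0 < ε j) (hε0 : Tendsto ε atTop (𝓝 0))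
    (F : ℕ → α → E) (Flim : α → E)
    (hF : ∀ j, MemLp (F j) 2 μ) (hFlim : MemLp Flim 2 μ)
    (hFw : ∀ (B : E →ₗ[ℝ] E →ₗ[ℝ] ℝ) (H : α → E), MemLp H 2 μ →
      Tendsto (fun j => ∫ x, B (F j x) (H x) ∂μ) atTop (𝓝 (∫ x, B (Flim x) (H x) ∂μ)))
    (hFM : ∃ M, ∀ j, ∫ x, ‖F j x‖ ^ 2 ∂μ ≤ M)
    (G : ℕ → α → E) (Glim : α → E)
    (hG : ∀ j, MemLp (G j) 2 μ) (hGlim : MemLp Glim 2 μ)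
    (hGb : ∃ K : ℝ, ∀ j, ∀ᵐ x ∂μ, ‖G j x‖ ≤ K)
    (hs : Tendsto (fun j => eLpNorm (fun x => G j x - Glim x) 2 μ) atTop (𝓝 0)) :
    ENNReal.ofReal ((1 / 2) * ∫ x,
          iteratedFDeriv ℝ 2 Φ 1 ![Flim x + Glim x, Flim x + Glim x] ∂μ) ≤
      Filter.liminf (fun j => ENNReal.ofReal ((ε j)⁻¹ ^ 2) *
        ∫⁻ x, ENNReal.ofReal
          (Φ (NormedSpace.exp ((ε j) • G j x) * (1 + (ε j) • F j x))) ∂μ) atTop := by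
  obtain ⟨M, hM⟩ := hFM
  obtain ⟨K₀, hK₀⟩ := hGb
  set K := max K₀ 1 with hK
  have hK1 : 1 ≤ K := le_max_right _ _
  have hGK : ∀ j, ∀ᵐ x ∂μ, ‖G j x‖ ≤ K := fun j => by
    filter_upwards [hK₀ j] with x hx using hx.trans (le_max_left _ _)
  set B := fderiv ℝ (fderiv ℝ Φ) 1 with hB
  have hH : MemLp (fun x => Flim x + Glim x) 2 μ := hFlim.add hGlim
  have hV : ∀ j, MemLp (fun x => F j x + G j x) 2 μ := fun j => (hF j).add (hG j)
  have hscale : ∀ j, ENNReal.ofReal ((ε j)⁻¹ ^ 2) *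
        ∫⁻ x, ENNReal.ofReal
          (Φ (NormedSpace.exp ((ε j) • G j x) * (1 + (ε j) • F j x))) ∂μ =
      ∫⁻ x, ENNReal.ofReal ((ε j)⁻¹ ^ 2 *
          (Φ (NormedSpace.exp ((ε j) • G j x) * (1 + (ε j) • F j x)))) ∂μ := by
    intro j
    rw [← lintegral_const_mul' _ _ ENNReal.ofReal_ne_top]
    congr 1
    ext x
    rw [ENNReal.ofReal_mul (by positivity)]
  simp only [hscale, iteratedFDeriv_two_apply, Matrix.cons_val_zero, Matrix.cons_val_one]
  refine liminf_abstract μ B (psd_of_min Φ 1 hC h0 h1) (fun j x => F j x + G j x)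
    (fun x => Flim x + Glim x) hV hH (2 * M + 2 * (K ^ 2 * μ.real Set.univ)) ?_ ?_ ε hεpos hε0
    _ (fun j x => mul_nonneg (by positivity) (h0 _)) (‖B‖ + 2) (by positivity) ?_
  · intro j
    have iF : Integrable (fun x => ‖F j x‖ ^ 2) μ := (hF j).integrable_norm_pow (by norm_num)
    have iV : Integrable (fun x => ‖F j x + G j x‖ ^ 2) μ :=
      (hV j).integrable_norm_pow (by norm_num)
    have h : ∫ x, ‖F j x + G j x‖ ^ 2 ∂μ ≤ ∫ x, (2 * ‖F j x‖ ^ 2 + 2 * K ^ 2) ∂μ := by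
      refine integral_mono_ae iV ((iF.const_mul 2).add (integrable_const _)) ?_
      filter_upwards [hGK j] with x hx
      have h2 : ‖F j x + G j x‖ ≤ ‖F j x‖ + K := (norm_add_le _ _).trans (by gcongr)
      have h3 : ‖F j x + G j x‖ ^ 2 ≤ (‖F j x‖ + K) ^ 2 := by gcongr
      nlinarith [sq_nonneg (‖F j x‖ - K)]
    refine h.trans ?_
    rw [integral_add (iF.const_mul 2) (integrable_const _), integral_const_mul, integral_const]
    have := hM j
    rw [smul_eq_mul]
    nlinarith
  · have hw := hFw (LinearMap.mk₂ ℝ (fun u v => B u v) (by simp) (by simp) (by simp) (by simp))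
      (fun x => Flim x + Glim x) hH
    simp only [LinearMap.mk₂_apply] at hw
    have hw2 := hw.add (strong_conv μ B G Glim _ hG hGlim hH hs)
    have e : ∀ (f g : α → E), MemLp f 2 μ → MemLp g 2 μ →
        ∫ x, B (f x) (Flim x + Glim x) ∂μ + ∫ x, B (g x) (Flim x + Glim x) ∂μ
        = ∫ x, B (f x + g x) (Flim x + Glim x) ∂μ := by
      intro f g hf hg
      rw [← integral_add (bilin_integrable μ B _ _ hf hH) (bilin_integrable μ B _ _ hg hH)]
      congr 1
      ext x
      rw [map_add B, _root_.add_apply]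
    rw [e _ _ hFlim hGlim] at hw2
    exact hw2.congr fun j => e _ _ (hF j) (hG j)
  · intro δ hδ hδ1
    obtain ⟨ρ, hρ, h⟩ := pointwise_bound Φ h0 h1 hC K hK1 δ hδ hδ1
    refine ⟨ρ, hρ, fun j hj => ?_⟩
    filter_upwards [hGK j] with x hx hle
    exact h (ε j) (hεpos j) hj (F j x) (G j x) _ hx hle

theorem frob_sq {d : ℕ} (A : Matrix (Fin d) (Fin d) ℝ) : ‖A‖ ^ 2 = ∑ a, ∑ b, A a b ^ 2 := by
  rw [Matrix.frobenius_norm_def, ← Real.rpow_natCast, ← Real.rpow_mul (by positivity)]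
  simp

/-- The Γ-liminf inequality for the rescaled elastic energies: if `Φ ≥ 0` is `C²` near `SO(d)`,
frame-indifferent, vanishing on `SO(d)`, with `Φ(F) ≥ g_p(dist(F, SO(d)))`, `ε_j → 0⁺`,
`F_j ⇀ F` weakly in `L²(Ω; ℝ^{d×d})`, and `G_j → G` strongly in `L²` with a uniform `L^∞`
bound, then
`liminf_j ε_j⁻² ∫_Ω Φ(exp(ε_j G_j)(I + ε_j F_j)) dx ≥ (1/2) ∫_Ω D²Φ(I)[F + G, F + G] dx`.
Since `Φ ≥ 0`, the energies are written via the lower Lebesgue integral in `ℝ≥0∞`. -/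
theorem stmt19 (d : ℕ) (hd : 2 ≤ d) (p : ℝ) (hp : 2 ≤ p)
    (Ω : Set (EuclideanSpace ℝ (Fin d))) (hΩmeas : MeasurableSet Ω)
    (hΩbdd : Bornology.IsBounded Ω) (hΩfin : volume Ω < ⊤)
    (Φ : Matrix (Fin d) (Fin d) ℝ → ℝ) (hΦnonneg : ∀ F, 0 ≤ Φ F)
    (U : Set (Matrix (Fin d) (Fin d) ℝ)) (hUopen : IsOpen U) (hSOU : SOd d ⊆ U)
    (hC2 : ContDiffOn ℝ 2 Φ U)
    (hframe : ∀ Q ∈ SOd d, ∀ F : Matrix (Fin d) (Fin d) ℝ, Φ (Q * F) = Φ F)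
    (hΦSO : ∀ R ∈ SOd d, Φ R = 0)
    (hcoer : ∀ F : Matrix (Fin d) (Fin d) ℝ, gp p (Metric.infDist F (SOd d)) ≤ Φ F)
    (ε : ℕ → ℝ) (hεpos : ∀ j, 0 < ε j) (hε0 : Tendsto ε atTop (𝓝 0))
    (F : ℕ → EuclideanSpace ℝ (Fin d) → Matrix (Fin d) (Fin d) ℝ)
    (Flim : EuclideanSpace ℝ (Fin d) → Matrix (Fin d) (Fin d) ℝ)
    (hF : ∀ j, MemLp (F j) 2 (volume.restrict Ω))
    (hFlim : MemLp Flim 2 (volume.restrict Ω))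
    (hFweak : ∀ G : EuclideanSpace ℝ (Fin d) → Matrix (Fin d) (Fin d) ℝ,
      MemLp G 2 (volume.restrict Ω) →
      Tendsto (fun j => ∫ x in Ω, ∑ a, ∑ b, F j x a b * G x a b) atTop
        (𝓝 (∫ x in Ω, ∑ a, ∑ b, Flim x a b * G x a b)))
    (G : ℕ → EuclideanSpace ℝ (Fin d) → Matrix (Fin d) (Fin d) ℝ)
    (Glim : EuclideanSpace ℝ (Fin d) → Matrix (Fin d) (Fin d) ℝ)
    (hG : ∀ j, MemLp (G j) 2 (volume.restrict Ω))
    (hGlim : MemLp Glim 2 (volume.restrict Ω))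
    (hGbdd : ∃ K : ℝ, ∀ j, ∀ x ∈ Ω, ‖G j x‖ ≤ K)
    (hGstrong : Tendsto
      (fun j => eLpNorm (fun x => G j x - Glim x) 2 (volume.restrict Ω)) atTop (𝓝 0)) :
    ENNReal.ofReal
        ((1 / 2) * ∫ x in Ω,
          iteratedFDeriv ℝ 2 Φ 1 ![Flim x + Glim x, Flim x + Glim x]) ≤
      Filter.liminf (fun j => ENNReal.ofReal ((ε j)⁻¹ ^ 2) *
        ∫⁻ x in Ω, ENNReal.ofReal
          (Φ (NormedSpace.exp ((ε j) • G j x) * (1 + (ε j) • F j x)))) atTop := by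
  have : IsFiniteMeasure (volume.restrict Ω) := ⟨by simpa using hΩfin⟩
  have h1SO : (1 : Matrix (Fin d) (Fin d) ℝ) ∈ SOd d := by simp [SOd]
  have hC : ContDiffAt ℝ 2 Φ 1 := hC2.contDiffAt (hUopen.mem_nhds (hSOU h1SO))
  have hw : ∀ (B : Matrix (Fin d) (Fin d) ℝ →ₗ[ℝ] Matrix (Fin d) (Fin d) ℝ →ₗ[ℝ] ℝ)
      (H : EuclideanSpace ℝ (Fin d) → Matrix (Fin d) (Fin d) ℝ),
      MemLp H 2 (volume.restrict Ω) →
      Tendsto (fun j => ∫ x in Ω, B (F j x) (H x)) atTop (𝓝 (∫ x in Ω, B (Flim x) (H x))) := by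
    intro B H hH
    let L : Matrix (Fin d) (Fin d) ℝ →ₗ[ℝ] Matrix (Fin d) (Fin d) ℝ :=
      { toFun := fun X => Matrix.of fun a b => B (Matrix.single a b 1) X
        map_add' := fun X Y => by ext a b; simp
        map_smul' := fun c X => by ext a b; simp }
    have h := hFweak (fun x => L (H x)) (memLp_linear _ L H hH)
    have e : ∀ X Y : Matrix (Fin d) (Fin d) ℝ, ∑ a, ∑ b, X a b * L Y a b = B X Y := by
      intro X Y
      conv_rhs => rw [Matrix.matrix_eq_sum_single X]
      simp only [map_sum, LinearMap.sum_apply]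
      refine Finset.sum_congr rfl fun a _ => Finset.sum_congr rfl fun b _ => ?_
      have : Matrix.single a b (X a b) = X a b • Matrix.single a b (1:ℝ) := by simp
      rw [this, map_smul]
      rfl
    simpa only [e] using h
  have hent : ∀ a b (f : EuclideanSpace ℝ (Fin d) → Matrix (Fin d) (Fin d) ℝ),
      MemLp f 2 (volume.restrict Ω) → MemLp (fun x => f x a b) 2 (volume.restrict Ω) :=
    fun a b f hf => memLp_linear _ (Matrix.entryLinearMap ℝ ℝ a b) f hf
  have hbd : ∀ a b, ∃ M, ∀ j, ∫ x in Ω, F j x a b ^ 2 ≤ M := by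
    intro a b
    refine weak_bdd _ (fun j x => F j x a b) (fun j => hent a b _ (hF j)) (fun g hg => ?_)
    have h := hFweak (fun x => Matrix.singleLinearMap ℝ a b (g x))
      (memLp_linear _ (Matrix.singleLinearMap ℝ a b) g hg)
    refine ⟨_, h.congr fun j => ?_⟩
    congr 1
    ext x
    rw [Finset.sum_eq_single a (fun i _ hi => by simp [Matrix.single_apply_of_row_ne hi.symm])
      (by simp), Finset.sum_eq_single b
      (fun i _ hi => by simp [Matrix.single_apply_of_col_ne _ _ hi.symm]) (by simp)]
    simp
  have hFM : ∃ M, ∀ j, ∫ x in Ω, ‖F j x‖ ^ 2 ≤ M := by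
    choose M hM using hbd
    refine ⟨∑ a, ∑ b, M a b, fun j => ?_⟩
    have i : ∀ a b, Integrable (fun x => F j x a b ^ 2) (volume.restrict Ω) :=
      fun a b => (hent a b _ (hF j)).integrable_sq
    simp only [frob_sq]
    rw [integral_finset_sum _ (fun a _ => integrable_finset_sum _ fun b _ => i a b)]
    refine Finset.sum_le_sum fun a _ => ?_
    rw [integral_finset_sum _ (fun b _ => i a b)]
    exact Finset.sum_le_sum fun b _ => hM a b j
  have hGb : ∃ K : ℝ, ∀ j, ∀ᵐ x ∂(volume.restrict Ω), ‖G j x‖ ≤ K := by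
    obtain ⟨K, hK⟩ := hGbdd
    exact ⟨K, fun j => ae_restrict_of_forall_mem hΩmeas (hK j)⟩
  exact @main_abstract _ (Matrix (Fin d) (Fin d) ℝ) _ (volume.restrict Ω) _
    Matrix.frobeniusNormedRing Matrix.frobeniusNormedAlgebra inferInstance
    Φ hΦnonneg (hΦSO 1 h1SO) hC ε hεpos hε0 F Flim hF hFlim hw hFM G Glim hG hGlim hGb hGstrong
end
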